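/- For every τ in the complex upper half-plane, (1 + c(τ)³)·c(−1/(6τ))³ = 1/8 − c(τ)³; equivalently c(−1/(6τ))³ = (1/8 − c(τ)³)/(1 + c(τ)³). -/

import Mathlib

open Complex

/-- The nome `q = exp(2πiτ)`. -/
noncomputable def nome (τ : ℂ) : ℂ := Complex.exp (2 * Real.pi * I * τ)

/-- Ramanujan's cubic continued fraction, as an infinite product:
`c(τ) = q^{1/3} ∏_{n≥1} (1-q^{6n-1})(1-q^{6n-5})/(1-q^{6n-3})²`. -/
noncomputable def c (τ : ℂ) : ℂ :=
  Complex.exp (2 * Real.pi * I * τ / 3) *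
    ∏' n : ℕ,
      ((1 - nome τ ^ (6 * (n + 1) - 1)) * (1 - nome τ ^ (6 * (n + 1) - 5)) /
        (1 - nome τ ^ (6 * (n + 1) - 3)) ^ 2)

/-!
Trisecting `φ(-q) = ∑ (-1)^m q^(m²)` and applying Jacobi's triple product gives
`φ(-q^{1/3}) = φ(-q³) (1 - 2 c(τ))`. Multiplying over the three cube roots of `q` turns this into
an eta quotient for `1 - 8 c(τ)³`, while `c(τ)` is itself an eta quotient by its definition.
Applying both formulas at `-1/(6τ)` and inverting each eta function, one finds, with
`V = η(2τ)⁵ η(6τ) / (η(τ) η(3τ)⁵)`,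
`9 c(τ)³ = V (1 - 8 c(-1/(6τ))³)` and `1 - 8 c(τ)³ = V · 8 c(-1/(6τ))³`.
Their sum is `V = 1 + c(τ)³`, and the second relation is then the theorem.
-/

open Filter Topology

lemma primitiveRoot_pow_mul_pow {M : Type*} [CommMonoid M] {ζ : M} {m : ℕ}
    (hζ : IsPrimitiveRoot ζ m) (k : ℕ) (a : M) : (ζ ^ k * a) ^ m = a ^ m := by
  rw [mul_pow, pow_right_comm, hζ.pow_eq_one, one_pow, one_mul]

lemma prod_one_sub_primitiveRoot_pow_mul {R : Type*} [CommRing R] [IsDomain R] {ζ : R} {m : ℕ}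
    (hζ : IsPrimitiveRoot ζ m) (hm : m ≠ 0) (a : R) :
    ∏ k ∈ Finset.range m, (1 - ζ ^ k * a) = 1 - a ^ m := by
  simpa only [Polynomial.eval_prod, Polynomial.eval_sub, Polynomial.eval_pow, Polynomial.eval_X,
    Polynomial.eval_C, one_pow] using
    (congrArg (Polynomial.eval 1) (X_pow_sub_C_eq_prod hζ (Nat.pos_of_ne_zero hm) rfl)).symm

section FiniteTripleProduct

variable {K : Type*} [Field K] {q : K}

/-- The reciprocal `1 / (q; q)_k` of the `q`-factorial, extended by `0` to negative `k`. -/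
noncomputable def invQFactorial (q : K) (k : ℤ) : K :=
  if k < 0 then 0 else (∏ i ∈ Finset.range k.toNat, (1 - q * q ^ i))⁻¹

lemma invQFactorial_sub_one (hq : ¬IsOfFinOrder q) (k : ℤ) :
    invQFactorial q (k - 1) = (1 - q ^ k) * invQFactorial q k := by
  rcases lt_trichotomy k 0 with hk | rfl | hk
  · simp [invQFactorial, hk, hk.trans one_pos]
  · simp [invQFactorial]
  · obtain ⟨n, rfl⟩ : ∃ n : ℕ, k = n + 1 := ⟨(k - 1).toNat, by lia⟩
    have hfactor : 1 - q * q ^ n ≠ 0 := by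
      rw [← pow_succ', sub_ne_zero]
      exact fun h ↦ hq (isOfFinOrder_iff_pow_eq_one.mpr ⟨n + 1, n.succ_pos, h.symm⟩)
    have hzpow : q ^ ((n : ℤ) + 1) = q * q ^ n := by rw [← pow_succ']; norm_cast
    rw [hzpow, add_sub_cancel_right, invQFactorial, invQFactorial, if_neg (by lia),
      if_neg (by lia), Int.toNat_natCast, Int.toNat_natCast_add_one, Finset.prod_range_succ,
      mul_inv_rev, mul_inv_cancel_left₀ hfactor]

/-- The Gaussian binomial coefficient `[2n choose n + k]`, zero for `|k| > n`. -/
noncomputable def centralQBinomial (q : K) (n : ℕ) (k : ℤ) : K :=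
  (∏ i ∈ Finset.range (2 * n), (1 - q * q ^ i)) *
    (invQFactorial q (n + k) * invQFactorial q (n - k))

lemma centralQBinomial_zero (q : K) (k : ℤ) : centralQBinomial q 0 k = if k = 0 then 1 else 0 := by
  rcases lt_trichotomy k 0 with hk | rfl | hk
  · simp [centralQBinomial, invQFactorial, hk, hk.ne]
  · simp [centralQBinomial, invQFactorial]
  · simp [centralQBinomial, invQFactorial, hk, hk.ne']

lemma centralQBinomial_succ (hq : ¬IsOfFinOrder q) (hq0 : q ≠ 0) (n : ℕ) (k : ℤ) :
    centralQBinomial q (n + 1) k = (1 + q ^ (2 * n + 1)) * centralQBinomial q n k +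
      q ^ (n + 1) * q ^ (-k) * centralQBinomial q n (k - 1) +
      q ^ (n + 1) * q ^ k * centralQBinomial q n (k + 1) := by
  have hadd := invQFactorial_sub_one hq (n + 1 + k)
  have hadd' := invQFactorial_sub_one hq (n + k)
  have hsub := invQFactorial_sub_one hq (n + 1 - k)
  have hsub' := invQFactorial_sub_one hq (n - k)
  rw [show (n + 1 + k - 1 : ℤ) = n + k by ring] at hadd
  rw [show (n + 1 - k - 1 : ℤ) = n - k by ring] at hsub
  simp only [centralQBinomial, Nat.cast_add_one, mul_add_one, Finset.prod_range_succ]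
  rw [show (n + (k - 1) : ℤ) = n + k - 1 by ring, show (n - (k + 1) : ℤ) = n - k - 1 by ring,
    show (n - (k - 1) : ℤ) = n + 1 - k by ring, show (n + (k + 1) : ℤ) = n + 1 + k by ring,
    hadd', hsub', hadd, hsub]
  simp only [zpow_sub₀ hq0, zpow_add₀ hq0, zpow_natCast, zpow_one, zpow_neg]
  have := zpow_ne_zero k hq0
  field_simp
  ring

lemma zpow_sq_mul_zpow_add (hq0 : q ≠ 0) {x : K} (hx : x ≠ 0) (m k : ℤ) :
    q ^ ((m + k) ^ 2) * x ^ (m + k) =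
      q ^ (k ^ 2) * x ^ k * (q ^ (m ^ 2) * (q ^ (2 * k) * x) ^ m) := by
  rw [show (m + k) ^ 2 = m ^ 2 + 2 * k * m + k ^ 2 by ring, zpow_add₀ hq0, zpow_add₀ hq0,
    zpow_add₀ hx, mul_zpow, zpow_mul]
  ring

variable [TopologicalSpace K] [IsTopologicalRing K]

lemma hasSum_finite_tripleProduct (hq : ¬IsOfFinOrder q) (hq0 : q ≠ 0) {x : K} (hx : x ≠ 0)
    (n : ℕ) :
    HasSum (fun m : ℤ ↦ centralQBinomial (q ^ 2) n m * (q ^ (m ^ 2) * x ^ m))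
      (∏ i ∈ Finset.range n,
        (1 - -(q * x) * (q ^ 2) ^ i) * (1 - -(q * x⁻¹) * (q ^ 2) ^ i)) := by
  induction n with
  | zero =>
    simp only [centralQBinomial_zero, ite_mul, one_mul, zero_mul, Finset.prod_range_zero]
    convert hasSum_single (0 : ℤ) fun m hm ↦ if_neg hm using 1
    simp
  | succ n ih =>
    have hleft := ((Equiv.addRight (-1 : ℤ)).hasSum_iff.mpr ih).mul_left (q ^ (2 * n + 1) * x)
    have hright := ((Equiv.addRight (1 : ℤ)).hasSum_iff.mpr ih).mul_left (q ^ (2 * n + 1) * x⁻¹)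
    have hprod : ∏ i ∈ Finset.range (n + 1),
        (1 - -(q * x) * (q ^ 2) ^ i) * (1 - -(q * x⁻¹) * (q ^ 2) ^ i) =
        (1 + (q ^ 2) ^ (2 * n + 1) + q ^ (2 * n + 1) * x + q ^ (2 * n + 1) * x⁻¹) *
        ∏ i ∈ Finset.range n, (1 - -(q * x) * (q ^ 2) ^ i) * (1 - -(q * x⁻¹) * (q ^ 2) ^ i) := by
      rw [Finset.prod_range_succ_comm]
      congr 1
      field_simp
      ring
    rw [hprod, add_mul, add_mul]
    refine (((ih.mul_left (1 + (q ^ 2) ^ (2 * n + 1))).add hleft).add hright).congr_fun fun m ↦ ?_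
    simp only [Function.comp_apply, Equiv.coe_addRight, zpow_sq_mul_zpow_add hq0 hx m, mul_zpow,
      centralQBinomial_succ (fun h ↦ hq (h.of_pow two_ne_zero)) (pow_ne_zero 2 hq0)]
    have hqm (j : ℤ) : (q ^ (2 * j)) ^ m = ((q ^ 2) ^ m) ^ j := by
      rw [← zpow_natCast, ← zpow_mul, ← zpow_mul, ← zpow_mul,
        Nat.cast_ofNat, mul_right_comm, mul_assoc]
    have hqm0 := zpow_ne_zero m (pow_ne_zero 2 hq0)
    simp only [hqm, zpow_neg, neg_sq, one_pow, zpow_one, ← sub_eq_add_neg]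
    field_simp
    ring

end FiniteTripleProduct

section QSeries

variable {𝕜 : Type*} [NormedField 𝕜] {q : 𝕜}

/-- The infinite `q`-Pochhammer symbol `(a; q)_∞`. -/
noncomputable def qPochhammer (a q : 𝕜) : 𝕜 := ∏' n : ℕ, (1 - a * q ^ n)

/-- Euler's function `(q; q)_∞`. -/
noncomputable def eulerFunction (q : 𝕜) : 𝕜 := qPochhammer q q

/-- The product part of the cubic continued fraction, as a quotient of Euler functions. -/
noncomputable def cubicQuotient (q : 𝕜) : 𝕜 :=
  eulerFunction q * eulerFunction (q ^ 6) ^ 3 / (eulerFunction (q ^ 2) * eulerFunction (q ^ 3) ^ 3)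

/-- The two-variable theta series `θ(q, x)`, normalised so that `θ(q, -1)` is Ramanujan's
`φ(-q)`. -/
noncomputable def thetaSeries (q x : 𝕜) : 𝕜 := ∑' m : ℤ, q ^ (m ^ 2) * x ^ m

lemma norm_pow_lt_one (hq : ‖q‖ < 1) {m : ℕ} (hm : m ≠ 0) : ‖q ^ m‖ < 1 :=
  norm_pow q m ▸ pow_lt_one₀ (norm_nonneg q) hq hm

lemma not_isOfFinOrder_of_norm_lt_one (hq : ‖q‖ < 1) : ¬IsOfFinOrder q :=
  fun h ↦ hq.ne h.norm_eq_one

lemma norm_primitiveRoot_pow_mul {ζ : 𝕜} {m : ℕ} (hζ : IsPrimitiveRoot ζ m) (hm : m ≠ 0) (k : ℕ)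
    (a : 𝕜) : ‖ζ ^ k * a‖ = ‖a‖ := by
  rw [norm_mul, norm_pow, (hζ.isOfFinOrder hm).norm_eq_one, one_pow, one_mul]

lemma summable_norm_neg_mul_pow (hq : ‖q‖ < 1) (a : 𝕜) :
    Summable fun n : ℕ ↦ ‖-(a * q ^ n)‖ := by
  simpa using (summable_geometric_of_lt_one (norm_nonneg q) hq).mul_left ‖a‖

lemma summable_thetaSeries_nat (hq : ‖q‖ < 1) (x : 𝕜) :
    Summable fun n : ℕ ↦ ‖q ^ (n ^ 2) * x ^ n‖ := by
  have hlim : Tendsto (fun n : ℕ ↦ ‖q ^ n * x‖) atTop (𝓝 0) := by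
    simpa using ((tendsto_pow_atTop_nhds_zero_of_norm_lt_one hq).mul_const x).norm
  refine summable_geometric_two.of_norm_bounded_eventually_nat ?_
  filter_upwards [hlim.eventually_le_const one_half_pos] with n hn
  rw [norm_norm, sq, pow_mul, ← mul_pow, norm_pow]
  exact pow_le_pow_left₀ (norm_nonneg _) hn n

lemma summable_norm_thetaSeries (hq : ‖q‖ < 1) (x : 𝕜) :
    Summable fun m : ℤ ↦ ‖q ^ (m ^ 2) * x ^ m‖ := by
  refine .of_nat_of_neg ?_ ?_
  · exact_mod_cast summable_thetaSeries_nat hq x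
  · simp only [neg_sq, zpow_neg, ← inv_zpow]
    exact_mod_cast summable_thetaSeries_nat hq x⁻¹

lemma thetaSeries_inv (q x : 𝕜) : thetaSeries q x⁻¹ = thetaSeries q x := by
  rw [thetaSeries, ← (Equiv.neg ℤ).tsum_eq, thetaSeries]
  simp only [Equiv.neg_apply, neg_sq, inv_zpow', neg_neg]

lemma thetaSeries_zpow_mul (hq0 : q ≠ 0) {x : 𝕜} (hx : x ≠ 0) (k : ℤ) :
    q ^ (k ^ 2) * x ^ k * thetaSeries q (q ^ (2 * k) * x) = thetaSeries q x := by
  rw [thetaSeries, ← tsum_mul_left, thetaSeries,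
    ← (Equiv.addRight k).tsum_eq fun m ↦ q ^ (m ^ 2) * x ^ m]
  simp only [Equiv.coe_addRight, zpow_sq_mul_zpow_add hq0 hx]

variable [CompleteSpace 𝕜]

lemma hasProd_qPochhammer (hq : ‖q‖ < 1) (a : 𝕜) :
    HasProd (fun n : ℕ ↦ 1 - a * q ^ n) (qPochhammer a q) := by
  have h := (multipliable_one_add_of_summable (summable_norm_neg_mul_pow hq a)).hasProd
  simp only [← sub_eq_add_neg] at h
  exact h

lemma qPochhammer_ne_zero (hq : ‖q‖ < 1) {a : 𝕜} (ha : ‖a‖ < 1) : qPochhammer a q ≠ 0 := by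
  have hfactor (n : ℕ) : 1 + -(a * q ^ n) ≠ 0 := by
    rw [← sub_eq_add_neg, sub_ne_zero]
    refine fun h ↦ (norm_one (α := 𝕜)).not_lt (h ▸ ?_)
    rw [norm_mul, norm_pow]
    exact mul_lt_one_of_nonneg_of_lt_one_left (norm_nonneg a) ha
      (pow_le_one₀ (norm_nonneg q) hq.le)
  simpa only [qPochhammer, sub_eq_add_neg] using
    tprod_one_add_ne_zero_of_summable hfactor (summable_norm_neg_mul_pow hq a)

lemma eulerFunction_ne_zero (hq : ‖q‖ < 1) : eulerFunction q ≠ 0 := qPochhammer_ne_zero hq hq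

lemma eulerFunction_pow_ne_zero (hq : ‖q‖ < 1) {m : ℕ} (hm : m ≠ 0) : eulerFunction (q ^ m) ≠ 0 :=
  eulerFunction_ne_zero (norm_pow_lt_one hq hm)

lemma qPochhammer_eq_prod (hq : ‖q‖ < 1) (a : 𝕜) {m : ℕ} (hm : m ≠ 0) :
    qPochhammer a q = ∏ i ∈ Finset.range m, qPochhammer (a * q ^ i) (q ^ m) := by
  have hpartial (n : ℕ) :
      ∏ i ∈ Finset.range m, ∏ j ∈ Finset.range n, (1 - a * q ^ i * (q ^ m) ^ j) =
        ∏ k ∈ Finset.range (m * n), (1 - a * q ^ k) := by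
    rw [Finset.prod_comm]
    induction n with
    | zero => simp
    | succ n ih =>
      rw [Finset.prod_range_succ, ih, mul_add_one, Finset.prod_range_add]
      simp only [← pow_mul, mul_assoc, ← pow_add, add_comm (m * n)]
  refine tendsto_nhds_unique ((hasProd_qPochhammer hq a).tendsto_prod_nat.comp
    (tendsto_id.const_mul_atTop' (Nat.pos_of_ne_zero hm))) ?_
  exact (tendsto_finsetProd (Finset.range m) fun i _ ↦
    (hasProd_qPochhammer (norm_pow_lt_one hq hm) (a * q ^ i)).tendsto_prod_nat).congr hpartial

lemma eulerFunction_eq_prod (hq : ‖q‖ < 1) {m : ℕ} (hm : m ≠ 0) :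
    eulerFunction q = ∏ i ∈ Finset.range m, qPochhammer (q ^ (i + 1)) (q ^ m) := by
  simpa only [eulerFunction, pow_succ'] using qPochhammer_eq_prod hq q hm

lemma prod_qPochhammer_primitiveRoot_mul {ζ : 𝕜} {m : ℕ} (hζ : IsPrimitiveRoot ζ m) (hm : m ≠ 0)
    (hq : ‖q‖ < 1) (a : 𝕜) :
    ∏ k ∈ Finset.range m, qPochhammer (ζ ^ k * a) q = qPochhammer (a ^ m) (q ^ m) := by
  refine (hasProd_prod fun k _ ↦ hasProd_qPochhammer hq (ζ ^ k * a)).unique ?_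
  simpa only [mul_assoc, prod_one_sub_primitiveRoot_pow_mul hζ hm, mul_pow, pow_right_comm q _ m]
    using hasProd_qPochhammer (norm_pow_lt_one hq hm) (a ^ m)

/-- For `n` prime to `p` the factors `1 - (ζ ^ k * q) ^ n` multiply to `1 - q ^ (p * n)`, while
for `p ∣ n` they all coincide. -/
lemma prod_eulerFunction_mul {ζ : 𝕜} {p : ℕ} (hp : p.Prime) (hζ : IsPrimitiveRoot ζ p)
    (hq : ‖q‖ < 1) :
    (∏ k ∈ Finset.range p, eulerFunction (ζ ^ k * q)) * eulerFunction (q ^ p ^ 2) =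
      eulerFunction (q ^ p) ^ (p + 1) := by
  have hnorm (k : ℕ) : ‖ζ ^ k * q‖ < 1 := by rwa [norm_primitiveRoot_pow_mul hζ hp.ne_zero]
  have hqp := norm_pow_lt_one hq hp.ne_zero
  obtain ⟨r, rfl⟩ : ∃ r, p = r + 1 := ⟨p - 1, (Nat.sub_add_cancel hp.one_le).symm⟩
  have hsplit (k : ℕ) : eulerFunction (ζ ^ k * q) =
      (∏ i ∈ Finset.range r, qPochhammer ((ζ ^ (i + 1)) ^ k * q ^ (i + 1)) (q ^ (r + 1))) *
        eulerFunction (q ^ (r + 1)) := by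
    rw [eulerFunction_eq_prod (hnorm k) hp.ne_zero, Finset.prod_range_succ,
      primitiveRoot_pow_mul_pow hζ]
    simp only [mul_pow, pow_right_comm ζ k, eulerFunction]
  have hcoprime {i : ℕ} (hi : i ∈ Finset.range r) : IsPrimitiveRoot (ζ ^ (i + 1)) (r + 1) :=
    hζ.pow_of_coprime _ (Nat.coprime_of_lt_prime i.succ_ne_zero
      (Nat.succ_lt_succ (Finset.mem_range.mp hi)) hp).symm
  have hprod : ∏ i ∈ Finset.range r, ∏ k ∈ Finset.range (r + 1),
      qPochhammer ((ζ ^ (i + 1)) ^ k * q ^ (i + 1)) (q ^ (r + 1)) =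
      ∏ i ∈ Finset.range r, qPochhammer ((q ^ (r + 1)) ^ (i + 1)) ((q ^ (r + 1)) ^ (r + 1)) :=
    Finset.prod_congr rfl fun i hi ↦ by
      rw [prod_qPochhammer_primitiveRoot_mul (hcoprime hi) hp.ne_zero hqp, pow_right_comm]
  have hfold :
      (∏ i ∈ Finset.range r, qPochhammer ((q ^ (r + 1)) ^ (i + 1)) ((q ^ (r + 1)) ^ (r + 1))) *
        eulerFunction ((q ^ (r + 1)) ^ (r + 1)) = eulerFunction (q ^ (r + 1)) := by
    rw [eulerFunction_eq_prod hqp hp.ne_zero, Finset.prod_range_succ, ← eulerFunction]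
  simp only [hsplit, Finset.prod_mul_distrib, Finset.prod_const, Finset.card_range]
  rw [Finset.prod_comm, hprod, sq (r + 1), pow_mul, mul_right_comm, hfold, ← pow_succ']

lemma tendsto_prod_one_sub_pow (hq : ‖q‖ < 1) :
    Tendsto (fun n ↦ ∏ i ∈ Finset.range n, (1 - q * q ^ i)) atTop (𝓝 (eulerFunction q)) :=
  (hasProd_qPochhammer hq q).tendsto_prod_nat

lemma tendsto_invQFactorial (hq : ‖q‖ < 1) :
    Tendsto (invQFactorial q) atTop (𝓝 (eulerFunction q)⁻¹) := by
  have htoNat : Tendsto Int.toNat atTop atTop :=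
    tendsto_atTop_atTop.2 fun n ↦ ⟨n, fun k hk ↦ by lia⟩
  refine (((tendsto_prod_one_sub_pow hq).inv₀ (eulerFunction_ne_zero hq)).comp htoNat).congr' ?_
  filter_upwards [eventually_ge_atTop 0] with k hk
  rw [Function.comp_apply, invQFactorial, if_neg hk.not_gt]

lemma exists_norm_invQFactorial_le (hq : ‖q‖ < 1) : ∃ C, ∀ k, ‖invQFactorial q k‖ ≤ C := by
  obtain ⟨C, hC⟩ := (Metric.isBounded_range_of_tendsto _ ((tendsto_prod_one_sub_pow hq).inv₀
    (eulerFunction_ne_zero hq))).exists_norm_le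
  refine ⟨C, fun k ↦ ?_⟩
  unfold invQFactorial
  split_ifs
  · simpa using (norm_nonneg _).trans (hC _ ⟨0, rfl⟩)
  · exact hC _ ⟨_, rfl⟩

lemma tendsto_centralQBinomial (hq : ‖q‖ < 1) (k : ℤ) :
    Tendsto (fun n ↦ centralQBinomial q n k) atTop (𝓝 (eulerFunction q)⁻¹) := by
  have hshift (j : ℤ) : Tendsto (fun n : ℕ ↦ invQFactorial q (n + j)) atTop
      (𝓝 (eulerFunction q)⁻¹) :=
    (tendsto_invQFactorial hq).comp
      (tendsto_atTop_add_const_right _ j tendsto_natCast_atTop_atTop)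
  have hdouble := (tendsto_prod_one_sub_pow hq).comp (tendsto_id.const_mul_atTop' two_pos)
  simpa only [mul_inv_cancel_left₀ (eulerFunction_ne_zero hq)] using!
    hdouble.mul ((hshift k).mul (hshift (-k)))

lemma exists_norm_centralQBinomial_le (hq : ‖q‖ < 1) :
    ∃ C, ∀ n k, ‖centralQBinomial q n k‖ ≤ C := by
  obtain ⟨C, hC⟩ := exists_norm_invQFactorial_le hq
  obtain ⟨D, hD⟩ :=
    (Metric.isBounded_range_of_tendsto _ (tendsto_prod_one_sub_pow hq)).exists_norm_le
  refine ⟨D * (C * C), fun n k ↦ ?_⟩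
  rw [centralQBinomial, norm_mul, norm_mul]
  exact mul_le_mul (hD _ ⟨_, rfl⟩) (mul_le_mul (hC _) (hC _) (norm_nonneg _)
    ((norm_nonneg _).trans (hC 0))) (by positivity) ((norm_nonneg _).trans (hD _ ⟨0, rfl⟩))

/-- **Jacobi's triple product identity**, the limit of its finite form as `n → ∞`. -/
theorem thetaSeries_eq_mul_qPochhammer (hq : ‖q‖ < 1) (hq0 : q ≠ 0) {x : 𝕜} (hx : x ≠ 0) :
    thetaSeries q x = eulerFunction (q ^ 2) *
      (qPochhammer (-(q * x)) (q ^ 2) * qPochhammer (-(q * x⁻¹)) (q ^ 2)) := by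
  have hq2 := norm_pow_lt_one hq two_ne_zero
  obtain ⟨C, hC⟩ := exists_norm_centralQBinomial_le hq2
  have hprod := ((hasProd_qPochhammer hq2 (-(q * x))).mul
    (hasProd_qPochhammer hq2 (-(q * x⁻¹)))).tendsto_prod_nat
  have hsum := tendsto_tsum_of_dominated_convergence
    ((summable_norm_thetaSeries hq x).mul_left C)
    (fun m ↦ (tendsto_centralQBinomial hq2 m).mul_const (q ^ (m ^ 2) * x ^ m))
    (.of_forall fun n m ↦ by rw [norm_mul]; gcongr; exact hC n m)
  simp only [tsum_mul_left,
    (hasSum_finite_tripleProduct (not_isOfFinOrder_of_norm_lt_one hq) hq0 hx _).tsum_eq] at hsum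
  rw [tendsto_nhds_unique hprod hsum, ← thetaSeries,
    mul_inv_cancel_left₀ (eulerFunction_ne_zero hq2)]

lemma thetaSeries_eq_sum (hq : ‖q‖ < 1) (hq0 : q ≠ 0) {x : 𝕜} (hx : x ≠ 0) (n : ℕ) [NeZero n] :
    thetaSeries q x = ∑ j : Fin n, q ^ ((j : ℕ) ^ 2) * x ^ (j : ℕ) *
      thetaSeries (q ^ n ^ 2) (q ^ (2 * n * j) * x ^ n) := by
  obtain ⟨e, he⟩ : ∃ e : Fin n × ℤ ≃ ℤ, ∀ j m, e (j, m) = m * n + (j : ℕ) :=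
    ⟨(Equiv.prodComm _ _).trans (Int.divModEquiv n).symm, fun j m ↦ by simp [Int.divModEquiv]⟩
  have hterm (j : Fin n) (m : ℤ) : q ^ (e (j, m) ^ 2) * x ^ e (j, m) =
      q ^ ((j : ℕ) ^ 2) * x ^ (j : ℕ) *
        ((q ^ n ^ 2) ^ (m ^ 2) * (q ^ (2 * n * j) * x ^ n) ^ m) := by
    rw [he, zpow_sq_mul_zpow_add hq0 hx]
    simp only [← zpow_natCast, mul_zpow, ← zpow_mul, Nat.cast_pow, Nat.cast_mul, Nat.cast_ofNat]
    ring_nf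
  have hsummable : Summable fun p ↦ q ^ (e p ^ 2) * x ^ e p :=
    e.summable_iff.mpr (summable_norm_thetaSeries hq x).of_norm
  rw [thetaSeries, ← e.tsum_eq fun m ↦ q ^ (m ^ 2) * x ^ m, hsummable.tsum_prod, tsum_fintype]
  simp only [thetaSeries, ← tsum_mul_left, ← hterm]

/-- The terms `j = 1, 2` of the trisection agree by `x ↦ x⁻¹` and quasi-periodicity. -/
lemma thetaSeries_neg_one_eq_sub (hq : ‖q‖ < 1) (hq0 : q ≠ 0) :
    thetaSeries q (-1) =
      thetaSeries (q ^ 9) (-1) - 2 * q * thetaSeries (q ^ 9) (-q ^ 6) := by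
  have hq6 : -q ^ 6 ≠ 0 := neg_ne_zero.mpr (pow_ne_zero 6 hq0)
  have hperiod : q ^ 3 * thetaSeries (q ^ 9) (-q ^ 12) = -thetaSeries (q ^ 9) (-q ^ 6) := by
    rw [← thetaSeries_inv _ (-q ^ 6),
      ← thetaSeries_zpow_mul (pow_ne_zero 9 hq0) (inv_ne_zero hq6) 1]
    have harg : (q ^ 9) ^ (2 * 1 : ℤ) * (-q ^ 6)⁻¹ = -q ^ 12 := by
      rw [show (q ^ 9) ^ (2 * 1 : ℤ) = (q ^ 9) ^ 2 from zpow_ofNat _ 2]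
      field_simp
    rw [harg, one_pow, zpow_one, zpow_one]
    field_simp
  rw [thetaSeries_eq_sum hq hq0 (neg_ne_zero.mpr one_ne_zero) 3, Fin.sum_univ_three]
  simp only [Fin.val_zero, Fin.val_one, Fin.val_two, zero_pow two_ne_zero, pow_zero, pow_one,
    one_pow, Nat.reducePow, Nat.reduceMul, mul_zero, mul_one, one_mul, neg_one_sq,
    Odd.neg_one_pow (by decide : Odd 3), mul_neg_one]
  linear_combination q * hperiod

lemma thetaSeries_neg_one (hq : ‖q‖ < 1) (hq0 : q ≠ 0) :
    thetaSeries q (-1) = eulerFunction q ^ 2 / eulerFunction (q ^ 2) := by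
  have h := eulerFunction_eq_prod hq two_ne_zero
  rw [Finset.prod_range_succ, Finset.prod_range_one] at h
  rw [eq_div_iff (eulerFunction_pow_ne_zero hq two_ne_zero),
    thetaSeries_eq_mul_qPochhammer hq hq0 (neg_ne_zero.mpr one_ne_zero), h]
  simp only [eulerFunction, mul_neg, mul_one, neg_neg, inv_neg, inv_one, zero_add, pow_one,
    Nat.reduceAdd]
  ring

lemma prod_thetaSeries_neg_one_mul {ζ : 𝕜} {p : ℕ} (hp : p.Prime) (hp2 : p ≠ 2)
    (hζ : IsPrimitiveRoot ζ p) (hq : ‖q‖ < 1) (hq0 : q ≠ 0) :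
    (∏ k ∈ Finset.range p, thetaSeries (ζ ^ k * q) (-1)) * thetaSeries (q ^ p ^ 2) (-1) =
      thetaSeries (q ^ p) (-1) ^ (p + 1) := by
  have hnorm (k : ℕ) : ‖ζ ^ k * q‖ < 1 := by rwa [norm_primitiveRoot_pow_mul hζ hp.ne_zero]
  have hne (k : ℕ) : ζ ^ k * q ≠ 0 := mul_ne_zero (pow_ne_zero k (hζ.ne_zero hp.ne_zero)) hq0
  have hζ2 : IsPrimitiveRoot (ζ ^ 2) p :=
    hζ.pow_of_coprime 2 ((Nat.coprime_primes Nat.prime_two hp).mpr hp2.symm)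
  have hE := prod_eulerFunction_mul hp hζ hq
  have hE2 := prod_eulerFunction_mul hp hζ2 (norm_pow_lt_one hq two_ne_zero)
  have hp2 := pow_ne_zero 2 hp.ne_zero
  rw [thetaSeries_neg_one (norm_pow_lt_one hq hp2) (pow_ne_zero _ hq0),
    thetaSeries_neg_one (norm_pow_lt_one hq hp.ne_zero) (pow_ne_zero _ hq0),
    Finset.prod_congr rfl fun k _ ↦ thetaSeries_neg_one (hnorm k) (hne k), Finset.prod_div_distrib,
    Finset.prod_pow, div_mul_div_comm, ← mul_pow, hE, div_pow, pow_right_comm]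
  simp only [mul_pow, pow_right_comm _ _ 2, hE2]

lemma qPochhammer_one_mul_five (hq : ‖q‖ < 1) :
    qPochhammer q (q ^ 6) * qPochhammer (q ^ 5) (q ^ 6) =
      eulerFunction q * eulerFunction (q ^ 6) /
        (eulerFunction (q ^ 2) * eulerFunction (q ^ 3)) := by
  have h1 := eulerFunction_eq_prod hq (m := 6) (by norm_num)
  have h2 := eulerFunction_eq_prod (norm_pow_lt_one hq two_ne_zero) three_ne_zero
  have h3 := eulerFunction_eq_prod (norm_pow_lt_one hq three_ne_zero) two_ne_zero
  rw [eq_div_iff (mul_ne_zero (eulerFunction_pow_ne_zero hq two_ne_zero)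
    (eulerFunction_pow_ne_zero hq three_ne_zero)), h1, h2, h3]
  simp only [Finset.prod_range_succ, Finset.prod_range_zero, one_mul, ← pow_mul, eulerFunction,
    Nat.reduceAdd, Nat.reduceMul, zero_add, pow_one]
  ring

lemma qPochhammer_three (hq : ‖q‖ < 1) :
    qPochhammer (q ^ 3) (q ^ 6) = eulerFunction (q ^ 3) / eulerFunction (q ^ 6) := by
  have h := eulerFunction_eq_prod (norm_pow_lt_one hq three_ne_zero) two_ne_zero
  rw [eq_div_iff (eulerFunction_pow_ne_zero hq (by norm_num)), h]
  simp only [Finset.prod_range_succ, Finset.prod_range_zero, one_mul, ← pow_mul, eulerFunction,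
    Nat.reduceAdd, Nat.reduceMul, zero_add]

lemma qPochhammer_div_eq_cubicQuotient (hq : ‖q‖ < 1) :
    qPochhammer (q ^ 5) (q ^ 6) * qPochhammer q (q ^ 6) / qPochhammer (q ^ 3) (q ^ 6) ^ 2 =
      cubicQuotient q := by
  rw [mul_comm, qPochhammer_one_mul_five hq, qPochhammer_three hq, cubicQuotient]
  have := eulerFunction_pow_ne_zero hq (m := 6) (by norm_num)
  field_simp

lemma thetaSeries_div_eq_cubicQuotient (hq : ‖q‖ < 1) (hq0 : q ≠ 0) :
    thetaSeries (q ^ 3) (-q ^ 2) / thetaSeries (q ^ 3) (-1) = cubicQuotient q := by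
  have hq3 := norm_pow_lt_one hq three_ne_zero
  have hE := eulerFunction_pow_ne_zero hq (m := 6) (by norm_num)
  rw [← qPochhammer_div_eq_cubicQuotient hq,
    thetaSeries_eq_mul_qPochhammer hq3 (pow_ne_zero 3 hq0) (neg_ne_zero.mpr (pow_ne_zero 2 hq0)),
    thetaSeries_eq_mul_qPochhammer hq3 (pow_ne_zero 3 hq0) (neg_ne_zero.mpr one_ne_zero),
    ← pow_mul, mul_div_mul_left _ _ hE]
  have harg : q ^ 3 * (-q ^ 2)⁻¹ = -q := by field_simp
  rw [harg, mul_neg, ← pow_add, neg_neg, neg_neg, inv_neg_one, mul_neg_one, neg_neg, sq]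

lemma thetaSeries_neg_one_eq_mul (hq : ‖q‖ < 1) (hq0 : q ≠ 0) :
    thetaSeries q (-1) = thetaSeries (q ^ 9) (-1) * (1 - 2 * q * cubicQuotient (q ^ 3)) := by
  have hq3 := norm_pow_lt_one hq three_ne_zero
  have hθ : thetaSeries (q ^ 9) (-1) ≠ 0 := by
    rw [thetaSeries_neg_one (norm_pow_lt_one hq (by norm_num)) (pow_ne_zero 9 hq0), ← pow_mul]
    exact div_ne_zero (pow_ne_zero 2 (eulerFunction_pow_ne_zero hq (by norm_num)))
      (eulerFunction_pow_ne_zero hq (by norm_num))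
  rw [thetaSeries_neg_one_eq_sub hq hq0, ← thetaSeries_div_eq_cubicQuotient hq3 (pow_ne_zero 3 hq0),
    ← pow_mul, ← pow_mul]
  field_simp

/-- Multiply `thetaSeries_neg_one_eq_mul` over the three cube roots of `q ^ 3`. -/
lemma thetaSeries_neg_one_pow_four {ζ : 𝕜} (hζ : IsPrimitiveRoot ζ 3) (hq : ‖q‖ < 1)
    (hq0 : q ≠ 0) :
    thetaSeries (q ^ 3) (-1) ^ 4 =
      thetaSeries (q ^ 9) (-1) ^ 4 * (1 - 8 * q ^ 3 * cubicQuotient (q ^ 3) ^ 3) := by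
  have hnorm (k : ℕ) : ‖ζ ^ k * q‖ < 1 := by rwa [norm_primitiveRoot_pow_mul hζ three_ne_zero]
  have hne (k : ℕ) : ζ ^ k * q ≠ 0 := mul_ne_zero (pow_ne_zero k (hζ.ne_zero three_ne_zero)) hq0
  have hcube (k : ℕ) : (ζ ^ k * q) ^ 3 = q ^ 3 := primitiveRoot_pow_mul_pow hζ k q
  have hnine (k : ℕ) : (ζ ^ k * q) ^ 9 = q ^ 9 := by rw [pow_mul _ 3 3, hcube, ← pow_mul]
  have hfactors : ∏ k ∈ Finset.range 3, (1 - 2 * (ζ ^ k * q) * cubicQuotient (q ^ 3)) =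
      1 - 8 * q ^ 3 * cubicQuotient (q ^ 3) ^ 3 := by
    have h := prod_one_sub_primitiveRoot_pow_mul hζ three_ne_zero (2 * q * cubicQuotient (q ^ 3))
    rw [mul_pow, mul_pow] at h
    norm_num only at h
    rw [← h]
    exact Finset.prod_congr rfl fun k _ ↦ by rw [mul_left_comm, mul_assoc, mul_assoc]
  rw [← prod_thetaSeries_neg_one_mul Nat.prime_three (by norm_num) hζ hq hq0,
    Finset.prod_congr rfl fun k _ ↦ thetaSeries_neg_one_eq_mul (hnorm k) (hne k)]
  simp only [hcube, hnine, Finset.prod_mul_distrib, Finset.prod_const, Finset.card_range, hfactors,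
    Nat.reducePow]
  rw [mul_right_comm, ← pow_succ]

end QSeries

section Eta

open ModularForm

variable {τ : ℂ}

lemma norm_nome_lt_one (hτ : 0 < τ.im) : ‖nome τ‖ < 1 := by
  rw [nome, Complex.norm_exp, Real.exp_lt_one_iff]
  simpa using mul_pos Real.two_pi_pos hτ

lemma nome_ne_zero (τ : ℂ) : nome τ ≠ 0 := Complex.exp_ne_zero _

lemma nome_natCast_mul (n : ℕ) (τ : ℂ) : nome (n * τ) = nome τ ^ n := by
  rw [nome, nome, ← Complex.exp_nat_mul, mul_left_comm]

lemma c_eq_mul_cubicQuotient (hτ : 0 < τ.im) :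
    c τ = cexp (2 * Real.pi * I * τ / 3) * cubicQuotient (nome τ) := by
  have hq := norm_nome_lt_one hτ
  unfold c
  generalize nome τ = q at hq ⊢
  have hq6 := norm_pow_lt_one hq (m := 6) (by norm_num)
  have hq3 := qPochhammer_ne_zero hq6 (norm_pow_lt_one hq three_ne_zero)
  have hfactor (n : ℕ) : (1 - q ^ (6 * (n + 1) - 1)) * (1 - q ^ (6 * (n + 1) - 5)) /
      (1 - q ^ (6 * (n + 1) - 3)) ^ 2 = (1 - q ^ 5 * (q ^ 6) ^ n) * (1 - q * (q ^ 6) ^ n) /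
      ((1 - q ^ 3 * (q ^ 6) ^ n) * (1 - q ^ 3 * (q ^ 6) ^ n)) := by
    rw [show 6 * (n + 1) - 1 = 5 + 6 * n by lia, show 6 * (n + 1) - 5 = 1 + 6 * n by lia,
      show 6 * (n + 1) - 3 = 3 + 6 * n by lia, pow_add, pow_add, pow_add, pow_mul, pow_one, sq]
  have hprod := ((hasProd_qPochhammer hq6 (q ^ 5)).mul (hasProd_qPochhammer hq6 q)).div₀
    ((hasProd_qPochhammer hq6 (q ^ 3)).mul (hasProd_qPochhammer hq6 (q ^ 3)))
    (mul_ne_zero hq3 hq3)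
  rw [tprod_congr hfactor, hprod.tprod_eq, ← sq, qPochhammer_div_eq_cubicQuotient hq]

lemma eta_eq_mul_eulerFunction (τ : ℂ) :
    η τ = cexp (2 * Real.pi * I * τ / 24) * eulerFunction (nome τ) := by
  simp only [ModularForm.eta, Function.Periodic.qParam, eulerFunction, qPochhammer, nome,
    pow_succ', ofReal_ofNat,
    ofReal_one, div_one]

lemma eta_natCast_mul (n : ℕ) (τ : ℂ) :
    η (n * τ) = cexp (2 * Real.pi * I * τ / 24) ^ n * eulerFunction (nome τ ^ n) := by
  rw [eta_eq_mul_eulerFunction, nome_natCast_mul, ← Complex.exp_nat_mul, mul_left_comm,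
    mul_div_assoc]

lemma eta_natCast_mul_ne_zero (hτ : 0 < τ.im) {n : ℕ} (hn : n ≠ 0) : η (n * τ) ≠ 0 :=
  eta_ne_zero (by
    simpa [UpperHalfPlane.upperHalfPlaneSet] using
      mul_pos (Nat.cast_pos.mpr (Nat.pos_of_ne_zero hn)) hτ)

lemma c_eq_eta (hτ : 0 < τ.im) :
    c τ = η τ * η (6 * τ) ^ 3 / (η (2 * τ) * η (3 * τ) ^ 3) := by
  have h2 := eta_natCast_mul 2 τ
  have h3 := eta_natCast_mul 3 τ
  have h6 := eta_natCast_mul 6 τ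
  push_cast at h2 h3 h6
  have hcexp : cexp (2 * Real.pi * I * τ / 3) = cexp (2 * Real.pi * I * τ / 24) ^ 8 := by
    rw [← Complex.exp_nat_mul]
    congr 1
    push_cast
    ring
  rw [c_eq_mul_cubicQuotient hτ, cubicQuotient, h2, h3, h6, eta_eq_mul_eulerFunction, hcexp]
  have := Complex.exp_ne_zero (2 * Real.pi * I * τ / 24)
  generalize cexp (2 * Real.pi * I * τ / 24) = e at *
  field_simp

lemma thetaSeries_nome_neg_one (hτ : 0 < τ.im) :
    thetaSeries (nome τ) (-1) = η τ ^ 2 / η (2 * τ) := by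
  have h2 := eta_natCast_mul 2 τ
  push_cast at h2
  rw [thetaSeries_neg_one (norm_nome_lt_one hτ) (nome_ne_zero τ), h2, eta_eq_mul_eulerFunction,
    mul_pow, mul_div_mul_left _ _ (pow_ne_zero 2 (Complex.exp_ne_zero _))]

lemma one_sub_eight_mul_c_cube (hτ : 0 < τ.im) :
    1 - 8 * c τ ^ 3 = η τ ^ 8 * η (6 * τ) ^ 4 / (η (2 * τ) ^ 4 * η (3 * τ) ^ 8) := by
  have hr : nome (τ / 3) ^ 3 = nome τ := by
    rw [← nome_natCast_mul, Nat.cast_ofNat, mul_div_cancel₀ τ three_ne_zero]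
  have hr9 : nome (τ / 3) ^ 9 = nome (3 * τ) := by
    rw [pow_mul _ 3 3, hr, ← nome_natCast_mul, Nat.cast_ofNat]
  have hc : c τ ^ 3 = nome τ * cubicQuotient (nome τ) ^ 3 := by
    rw [c_eq_mul_cubicQuotient hτ, mul_pow, ← Complex.exp_nat_mul, Nat.cast_ofNat,
      mul_div_cancel₀ _ three_ne_zero, ← nome]
  have hη2 : η (2 * τ) ≠ 0 := by exact_mod_cast eta_natCast_mul_ne_zero hτ two_ne_zero
  have hη3 : η (3 * τ) ≠ 0 := by exact_mod_cast eta_natCast_mul_ne_zero hτ three_ne_zero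
  have hη6 : η (6 * τ) ≠ 0 := by
    exact_mod_cast eta_natCast_mul_ne_zero hτ (n := 6) (by norm_num)
  have hτ3 : 0 < (τ / 3).im := by simpa using hτ
  have h3τ : 0 < (3 * τ).im := by simpa using hτ
  have h := thetaSeries_neg_one_pow_four (Complex.isPrimitiveRoot_exp 3 three_ne_zero)
    (norm_nome_lt_one hτ3) (nome_ne_zero _)
  rw [hr, hr9, thetaSeries_nome_neg_one hτ, thetaSeries_nome_neg_one h3τ, mul_assoc 8, ← hc,
    ← mul_assoc 2 3 τ] at h
  norm_num only at h
  generalize η (2 * τ) = η₂, η (3 * τ) = η₃, η (6 * τ) = η₆, c τ = x at *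
  field_simp at h ⊢
  exact h.symm

lemma sqrt_ofReal_mul {r : ℝ} (hr : 0 < r) (z : ℂ) :
    Complex.sqrt (r * z) = √r * Complex.sqrt z := by
  rcases eq_or_ne z 0 with rfl | hz
  · simp [Complex.sqrt]
  rw [Complex.sqrt, Complex.sqrt, cpow_def_of_ne_zero (mul_ne_zero (ofReal_ne_zero.mpr hr.ne') hz),
    log_ofReal_mul hr hz, add_mul, Complex.exp_add, ← cpow_def_of_ne_zero hz, Real.sqrt_eq_rpow,
    ofReal_cpow hr.le, cpow_def_of_ne_zero (ofReal_ne_zero.mpr hr.ne'), ofReal_log hr.le]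
  norm_num

lemma eta_neg_one_div_mul (hτ : 0 < τ.im) {r : ℝ} (hr : 0 < r) :
    η (-1 / (r * τ)) = √r * ((Complex.sqrt I)⁻¹ * Complex.sqrt τ) * η (r * τ) := by
  have hrτ : 0 < (r * τ).im := by simpa using mul_pos hr hτ
  have h := eta_comp_eq_csqrt_I_inv hrτ
  simp only [Function.comp_apply, Pi.smul_apply, Pi.mul_apply, smul_eq_mul,
    sqrt_ofReal_mul hr] at h
  rw [h]
  ring

lemma exists_eta_mul_neg_one_div_six_mul (hτ : 0 < τ.im) :
    ∃ s : ℂ, s ≠ 0 ∧ η (-1 / (6 * τ)) = √2 * √3 * s * η (6 * τ) ∧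
      η (2 * (-1 / (6 * τ))) = √3 * s * η (3 * τ) ∧
      η (3 * (-1 / (6 * τ))) = √2 * s * η (2 * τ) ∧
      η (6 * (-1 / (6 * τ))) = s * η τ := by
  have hτ0 : τ ≠ 0 := by rintro rfl; exact hτ.false
  refine ⟨(Complex.sqrt I)⁻¹ * Complex.sqrt τ, ?_, ?_, ?_, ?_, ?_⟩
  · simp [Complex.sqrt, cpow_eq_zero_iff, hτ0]
  · have h := eta_neg_one_div_mul hτ (r := 2 * 3) (by norm_num)
    rw [Real.sqrt_mul zero_le_two] at h
    convert h using 2 <;> norm_num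
  · rw [show 2 * (-1 / (6 * τ)) = -1 / ((3 : ℝ) * τ) by push_cast; field_simp; norm_num]
    exact_mod_cast eta_neg_one_div_mul hτ three_pos
  · rw [show 3 * (-1 / (6 * τ)) = -1 / ((2 : ℝ) * τ) by push_cast; field_simp; norm_num]
    exact_mod_cast eta_neg_one_div_mul hτ two_pos
  · rw [show 6 * (-1 / (6 * τ)) = -1 / ((1 : ℝ) * τ) by push_cast; field_simp]
    simpa only [Real.sqrt_one, ofReal_one, one_mul] using eta_neg_one_div_mul hτ one_pos

lemma im_neg_one_div_six_mul_pos (hτ : 0 < τ.im) : 0 < (-1 / (6 * τ)).im := by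
  have h6τ : 0 < (6 * τ).im := by simpa using hτ
  simpa only [neg_div, one_div, neg_inv] using UpperHalfPlane.im_inv_neg_coe_pos ⟨6 * τ, h6τ⟩

lemma two_mul_c_neg_one_div (hτ : 0 < τ.im) :
    2 * c (-1 / (6 * τ)) = η τ ^ 3 * η (6 * τ) / (η (2 * τ) ^ 3 * η (3 * τ)) := by
  obtain ⟨s, hs, h1, h2, h3, h6⟩ := exists_eta_mul_neg_one_div_six_mul hτ
  have hsqrt2 : (√2 : ℂ) ^ 2 = 2 := by exact_mod_cast Real.sq_sqrt zero_le_two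
  have hsqrt2' : (√2 : ℂ) ≠ 0 := by simp
  have hsqrt3' : (√3 : ℂ) ≠ 0 := by simp
  rw [c_eq_eta (im_neg_one_div_six_mul_pos hτ), h1, h2, h3, h6]
  generalize η (2 * τ) = η₂, η (3 * τ) = η₃, η (6 * τ) = η₆
  field_simp
  rw [hsqrt2]

lemma one_sub_eight_mul_c_neg_one_div_cube (hτ : 0 < τ.im) :
    1 - 8 * c (-1 / (6 * τ)) ^ 3 =
      9 * η τ ^ 4 * η (6 * τ) ^ 8 / (η (2 * τ) ^ 8 * η (3 * τ) ^ 4) := by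
  obtain ⟨s, hs, h1, h2, h3, h6⟩ := exists_eta_mul_neg_one_div_six_mul hτ
  have hsqrt3 : (√3 : ℂ) ^ 4 = 9 := by
    rw [pow_mul _ 2 2, ← ofReal_pow, Real.sq_sqrt three_pos.le]
    norm_num
  have hsqrt2' : (√2 : ℂ) ≠ 0 := by simp
  rw [one_sub_eight_mul_c_cube (im_neg_one_div_six_mul_pos hτ), h1, h2, h3, h6]
  generalize η (2 * τ) = η₂, η (3 * τ) = η₃, η (6 * τ) = η₆
  field_simp
  rw [hsqrt3]
  ring

lemma one_sub_eight_mul_c_cube_eq (hτ : 0 < τ.im) :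
    1 - 8 * c τ ^ 3 = η (2 * τ) ^ 5 * η (6 * τ) / (η τ * η (3 * τ) ^ 5) *
      (8 * c (-1 / (6 * τ)) ^ 3) := by
  have hη1 : η τ ≠ 0 := by simpa using eta_natCast_mul_ne_zero hτ one_ne_zero
  have hη2 : η (2 * τ) ≠ 0 := by exact_mod_cast eta_natCast_mul_ne_zero hτ two_ne_zero
  have h8 : 8 * c (-1 / (6 * τ)) ^ 3 = (2 * c (-1 / (6 * τ))) ^ 3 := by ring
  rw [h8, two_mul_c_neg_one_div hτ, one_sub_eight_mul_c_cube hτ]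
  generalize η (2 * τ) = η₂, η (3 * τ) = η₃, η (6 * τ) = η₆ at *
  field_simp

lemma nine_mul_c_cube (hτ : 0 < τ.im) :
    9 * c τ ^ 3 = η (2 * τ) ^ 5 * η (6 * τ) / (η τ * η (3 * τ) ^ 5) *
      (1 - 8 * c (-1 / (6 * τ)) ^ 3) := by
  have hη1 : η τ ≠ 0 := by simpa using eta_natCast_mul_ne_zero hτ one_ne_zero
  have hη2 : η (2 * τ) ≠ 0 := by exact_mod_cast eta_natCast_mul_ne_zero hτ two_ne_zero
  rw [one_sub_eight_mul_c_neg_one_div_cube hτ, c_eq_eta hτ]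
  generalize η (2 * τ) = η₂, η (3 * τ) = η₃, η (6 * τ) = η₆ at *
  field_simp

lemma one_add_c_cube (hτ : 0 < τ.im) :
    1 + c τ ^ 3 = η (2 * τ) ^ 5 * η (6 * τ) / (η τ * η (3 * τ) ^ 5) := by
  linear_combination one_sub_eight_mul_c_cube_eq hτ + nine_mul_c_cube hτ

end Eta

/-- For `τ` in the upper half-plane, `(1 + c(τ)³)·c(−1/(6τ))³ = 1/8 − c(τ)³`. -/
theorem cubicCF_cube_inversion (τ : ℂ) (hτ : 0 < τ.im) :
    (1 + c τ ^ 3) * c (-1 / (6 * τ)) ^ 3 = 1 / 8 - c τ ^ 3 := by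
  have h := one_sub_eight_mul_c_cube_eq hτ
  rw [← one_add_c_cube hτ] at h
  linear_combination -h / 8
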